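/- arXiv:1301.6826 — 2 statements merged into one kernel-verified Lean document; each statement's English description precedes it below -/
import Mathlib

section
/- Let G be a finite group which is an SST-group or an NSST-group. Then G is an SC-group, i.e., every chief factor of G is a simple group. -/
open scoped Pointwise

section Defs

variable {G : Type*} [Group G]

/-- `K` is an SS-permutable supplement of `H` in `G`: `HK = G` and `H` permutes with
every Sylow subgroup of `K`. -/
def IsSSSupplement (H K : Subgroup G) : Prop :=
  (H : Set G) * (K : Set G) = Set.univ ∧
    ∀ (p : ℕ) [Fact p.Prime] (P : Sylow p K),
      (H : Set G) * ((P.toSubgroup.map K.subtype : Subgroup G) : Set G) =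
        ((P.toSubgroup.map K.subtype : Subgroup G) : Set G) * (H : Set G)

/-- `H` is SS-permutable in `G`: `H` has a supplement `K` such that `H` permutes with
every Sylow subgroup of `K`. -/
def IsSSPermutable (H : Subgroup G) : Prop :=
  ∃ K : Subgroup G, IsSSSupplement H K

/-- `H` is NSS-permutable in `G`: `H` has a normal supplement `K` such that `H` permutes
with every Sylow subgroup of `K`. -/
def IsNSSPermutable (H : Subgroup G) : Prop :=
  ∃ K : Subgroup G, K.Normal ∧ IsSSSupplement H K

/-- `H` is S-permutable in `G`: it permutes with every Sylow subgroup of `G`. -/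
def IsSPermutable (H : Subgroup G) : Prop :=
  ∀ (p : ℕ) [Fact p.Prime] (P : Sylow p G),
    (H : Set G) * ((P : Subgroup G) : Set G) = ((P : Subgroup G) : Set G) * (H : Set G)

/-- `H` is semipermutable in `G`: `HX = XH` for every subgroup `X` with `gcd(|H|,|X|) = 1`. -/
def IsSemipermutable (H : Subgroup G) : Prop :=
  ∀ X : Subgroup G, Nat.Coprime (Nat.card H) (Nat.card X) →
    (H : Set G) * (X : Set G) = (X : Set G) * (H : Set G)

/-- `H` is S-semipermutable in `G`: `HQ = QH` for every Sylow `q`-subgroup `Q` of `G`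
with `q` a prime not dividing `|H|`. -/
def IsSSemipermutable (H : Subgroup G) : Prop :=
  ∀ (q : ℕ) [Fact q.Prime], ¬ q ∣ Nat.card H → ∀ Q : Sylow q G,
    (H : Set G) * ((Q : Subgroup G) : Set G) = ((Q : Subgroup G) : Set G) * (H : Set G)

end Defs

/-- `G` is an SST-group: SS-permutability is a transitive relation. -/
def IsSSTGroup (G : Type*) [Group G] : Prop :=
  ∀ H K : Subgroup G, H ≤ K → IsSSPermutable (H.subgroupOf K) → IsSSPermutable K →
    IsSSPermutable H

/-- `G` is an NSST-group: NSS-permutability is a transitive relation. -/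
def IsNSSTGroup (G : Type*) [Group G] : Prop :=
  ∀ H K : Subgroup G, H ≤ K → IsNSSPermutable (H.subgroupOf K) → IsNSSPermutable K →
    IsNSSPermutable H

/-- `G` is a PST-group: S-permutability is a transitive relation. -/
def IsPSTGroup (G : Type*) [Group G] : Prop :=
  ∀ H K : Subgroup G, H ≤ K → IsSPermutable (H.subgroupOf K) → IsSPermutable K →
    IsSPermutable H

/-- `G` is a BT-group: semipermutability is a transitive relation. -/
def IsBTGroup (G : Type*) [Group G] : Prop :=
  ∀ H K : Subgroup G, H ≤ K → IsSemipermutable (H.subgroupOf K) → IsSemipermutable K →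
    IsSemipermutable H

/-!
Write `O_p(G)` for the intersection of the Sylow `p`-subgroups of `G`. Every subnormal subgroup of
an SST- or NSST-group is SS-permutable, and this property passes to quotients, so it suffices to
show that a minimal normal subgroup `M` is simple when all subnormal subgroups are SS-permutable.
If an SS-permutable subgroup `A` is normalized by every `p`-subgroup permuting with it, then its
normalizer contains a Sylow `p`-subgroup of a supplement of `A` and so has index prime to `p`.

* If `M` is a `p`-group, let `S` be a Sylow `p`-subgroup of `G` and let `z ∈ M` have order `p` and
  centralize `S`. Then `S` normalizes `⟨z⟩`, and by Dedekind's law so does every `q`-subgroup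
  permuting with `⟨z⟩`, for `q ≠ p`. So `⟨z⟩` is normal, and `M = ⟨z⟩` has order `p`.
* Otherwise let `A` be a minimal normal subgroup of `M`. If a `p`-subgroup `P` permutes with `A`
  and `x ∈ P` moves `A`, then `A` and its conjugate `Aˣ ≤ AP` intersect trivially, so `|Aˣ|` divides
  `|AP : A|` and `A` is a `p`-group. Then `1 ≠ A ≤ O_p(G)`, so `M ≤ O_p(G)`, a contradiction. So `A`
  is normal in `G`, and `M = A` is simple.
-/

open Subgroup

section Product

variable {G : Type*} [Group G]

theorem relIndex_eq_of_mul_eq {H K L : Subgroup G} (h : (H : Set G) * (K : Set G) = L) :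
    H.relIndex K = H.relIndex L := by
  have hKL : K ≤ L := fun k hk => h.subset ⟨1, H.one_mem, k, hk, one_mul k⟩
  refine Nat.card_congr (Equiv.ofBijective (quotientSubgroupOfEmbeddingOfLE H hKL)
    ⟨(quotientSubgroupOfEmbeddingOfLE H hKL).injective, fun q => ?_⟩)
  induction q using QuotientGroup.induction_on with
  | H l =>
    obtain ⟨a, ha, k, hk, hak⟩ := h.superset (L.inv_mem l.2)
    refine ⟨((⟨k⁻¹, K.inv_mem hk⟩ : K) : K ⧸ H.subgroupOf K), QuotientGroup.eq.2 ?_⟩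
    have hl : k * l = a⁻¹ :=
      eq_inv_of_mul_eq_one_right (by rw [← mul_assoc, show a * k = _ from hak, inv_mul_cancel])
    simpa [mem_subgroupOf, hl] using ha

theorem coe_sup_of_commute {A P : Subgroup G} (h : Commute (A : Set G) (P : Set G)) :
    ((A ⊔ P : Subgroup G) : Set G) = A * P := by
  let L : Subgroup G :=
    { carrier := A * P
      one_mem' := ⟨1, A.one_mem, 1, P.one_mem, one_mul 1⟩
      mul_mem' := fun {x y} hx hy => by
        have hxy : x * y ∈ (A * P * (A * P) : Set G) := Set.mul_mem_mul hx hy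
        rwa [h.symm.mul_mul_mul_comm, coe_mul_coe, coe_mul_coe] at hxy
      inv_mem' := fun {x} hx => by
        have hx' : x⁻¹ ∈ (A * P : Set G)⁻¹ := Set.inv_mem_inv.2 hx
        rwa [mul_inv_rev, inv_coe_set, inv_coe_set, ← h.eq] at hx' }
  refine Set.Subset.antisymm (sup_le (c := L) (fun a ha => ⟨a, ha, 1, P.one_mem, mul_one a⟩)
    fun x hx => ⟨1, A.one_mem, x, hx, one_mul x⟩) ?_
  rintro _ ⟨a, ha, x, hx, rfl⟩
  exact mul_mem_sup ha hx

theorem le_normalizer_of_commute {A M Q : Subgroup G} (hAM : A ≤ M) (hQM : Q ≤ normalizer M)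
    (hMQ : M ⊓ Q ≤ A) (h : Commute (A : Set G) (Q : Set G)) : Q ≤ normalizer A := by
  rw [le_normalizer_iff] at hQM ⊢
  intro x hx a ha
  obtain ⟨b, hb, y, hy, hby⟩ : x * a ∈ (A * Q : Set G) := h.eq ▸ Set.mul_mem_mul hx ha
  have hyx : y * x⁻¹ = b⁻¹ * (x * a * x⁻¹) := by
    rw [← show b * y = x * a from hby]; group
  have hyxA : y * x⁻¹ ∈ A := hMQ ⟨hyx ▸ M.mul_mem (M.inv_mem (hAM hb)) (hQM x hx a (hAM ha)),
    Q.mul_mem hy (Q.inv_mem hx)⟩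
  exact (A.mul_mem_cancel_left (A.inv_mem hb)).1 (hyx ▸ hyxA)

theorem isPGroup_of_disjoint_of_le_sup {p : ℕ} [Fact p.Prime] {A B P : Subgroup G} [Finite P]
    (hP : IsPGroup p P) (hAP : Commute (A : Set G) (P : Set G)) (hBA : B ≤ normalizer A)
    (hB : B ≤ A ⊔ P) (hdisj : Disjoint A B) : IsPGroup p B := by
  obtain ⟨n, hn⟩ := IsPGroup.iff_card.1 hP
  refine IsPGroup.of_card_dvd_pow (n := n) ?_
  calc Nat.card B = A.relIndex B := by
        rw [← inf_relIndex_right, hdisj.eq_bot, relIndex_bot_left]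
    _ = A.relIndex (A ⊔ B) :=
        relIndex_eq_of_mul_eq (coe_mul_of_right_le_normalizer_left A B hBA).symm
    _ ∣ A.relIndex (A ⊔ P) :=
        Dvd.intro _ (relIndex_mul_relIndex _ _ _ le_sup_left (sup_le le_sup_left hB))
    _ = A.relIndex P := (relIndex_eq_of_mul_eq (coe_sup_of_commute hAP).symm).symm
    _ ∣ Nat.card P := relIndex_dvd_card A P
    _ = p ^ n := hn

theorem relIndex_dvd_index_of_isSubnormal {K : Subgroup G} (hK : K.IsSubnormal) (H : Subgroup G) :
    H.relIndex K ∣ H.index := by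
  induction hK with
  | top => rw [relIndex_top_right]
  | step L K hLK _ hL ih =>
    rw [← relIndex_subgroupOf hLK, relIndex_eq_of_mul_eq (mul_normal _ _).symm]
    exact (relIndex_dvd_index_of_le le_sup_left).trans ih

end Product

section PGroup

variable {G : Type*} [Group G] {p : ℕ} [Fact p.Prime]

theorem le_sylow_of_isSubnormal [Finite G] {A : Subgroup G} (hA : A.IsSubnormal)
    (hp : IsPGroup p A) (S : Sylow p G) : A ≤ S := by
  obtain ⟨n, hn⟩ := IsPGroup.iff_card.1 hp
  have hdvd : (S : Subgroup G).relIndex A ∣ p ^ n := hn ▸ relIndex_dvd_card _ _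
  have hcop : (S.relIndex A).Coprime (p ^ n) := Nat.Coprime.pow_right n <| Nat.Coprime.symm <|
    (Nat.Prime.coprime_iff_not_dvd Fact.out).2 fun h =>
      S.not_dvd_index (h.trans (relIndex_dvd_index_of_isSubnormal hA _))
  exact relIndex_eq_one.1 (Nat.eq_one_of_dvd_coprimes hcop dvd_rfl hdvd)

theorem le_normalCore_sylow_of_isSubnormal [Finite G] {A : Subgroup G} (hA : A.IsSubnormal)
    (hp : IsPGroup p A) (S : Sylow p G) : A ≤ (S : Subgroup G).normalCore := by
  rw [normalCore_eq_iInf_map_conj]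
  exact le_iInf fun g => le_sylow_of_isSubnormal hA hp (g • S)

theorem inf_centralizer_ne_bot_of_dvd_card {M S : Subgroup G} [M.Normal] [Finite M]
    (hS : IsPGroup p S) (hM : p ∣ Nat.card M) : M ⊓ centralizer S ≠ ⊥ := by
  let _ : MulAction S M := MulAction.compHom M ((MulAut.conjNormal (H := M)).comp S.subtype)
  obtain ⟨z, hz, hz1⟩ := hS.exists_fixed_point_of_prime_dvd_card_of_fixed_point M hM
    (a := 1) fun s => map_one (MulAut.conjNormal (H := M) (s : G))
  have hzS : (z : G) ∈ centralizer (S : Set G) := fun s hs =>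
    mul_inv_eq_iff_eq_mul.1 (congrArg Subtype.val (hz ⟨s, hs⟩))
  exact fun h => hz1 (Subtype.ext ((mem_bot.1 (h.le ⟨z.2, hzS⟩)).symm))

end PGroup

section MinimalNormal

variable {G : Type*} [Group G] {M : Subgroup G}

/-- `M` is a minimal normal subgroup of `G`: it is minimal among the nontrivial normal subgroups. -/
def IsMinimalNormal (M : Subgroup G) : Prop :=
  Minimal (fun L : Subgroup G => L.Normal ∧ L ≠ ⊥) M

theorem exists_isMinimalNormal [Finite G] [Nontrivial G] : ∃ M : Subgroup G, IsMinimalNormal M :=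
  exists_minimal_of_wellFoundedLT (fun L : Subgroup G => L.Normal ∧ L ≠ ⊥)
    ⟨⊤, inferInstance, top_ne_bot⟩

namespace IsMinimalNormal

theorem normal (hM : IsMinimalNormal M) : M.Normal :=
  hM.prop.1

theorem ne_bot (hM : IsMinimalNormal M) : M ≠ ⊥ :=
  hM.prop.2

theorem eq_of_le (hM : IsMinimalNormal M) {L : Subgroup G} (hL : L.Normal) (hne : L ≠ ⊥)
    (hLM : L ≤ M) : L = M :=
  Minimal.eq_of_le hM ⟨hL, hne⟩ hLM

theorem le_or_disjoint (hM : IsMinimalNormal M) (L : Subgroup G) [L.Normal] :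
    M ≤ L ∨ Disjoint M L := by
  have := hM.normal
  by_cases h : M ⊓ L = ⊥
  · exact Or.inr (disjoint_iff.2 h)
  · exact Or.inl (inf_eq_left.1 (hM.eq_of_le inferInstance h inf_le_left))

theorem isSimpleGroup_of_top (h : IsMinimalNormal (⊤ : Subgroup G)) : IsSimpleGroup G :=
  have : Nontrivial G := nontrivial_iff.1 ⟨⊥, ⊤, h.ne_bot.symm⟩
  { eq_bot_or_eq_top_of_normal := fun _ hL =>
      or_iff_not_imp_left.2 fun hne => h.eq_of_le hL hne le_top }

theorem isPGroup_of_isSubnormal_le [Finite G] {p : ℕ} [Fact p.Prime] (hM : IsMinimalNormal M)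
    {A : Subgroup G} (hA : A.IsSubnormal) (hne : A ≠ ⊥) (hAM : A ≤ M) (hp : IsPGroup p A) :
    IsPGroup p M := by
  obtain ⟨S⟩ : Nonempty (Sylow p G) := inferInstance
  have hAS := le_normalCore_sylow_of_isSubnormal hA hp S
  have hMS : M ≤ (S : Subgroup G).normalCore :=
    (hM.le_or_disjoint _).resolve_right fun h => hne (le_bot_iff.1 (h hAM hAS))
  exact S.isPGroup'.to_le (hMS.trans (normalCore_le _))

theorem le_normalizer_map_subtype_of_commute {p : ℕ} [Fact p.Prime] [M.Normal]
    {A : Subgroup M} (hA : IsMinimalNormal A) (hAp : ¬ IsPGroup p A) {P : Subgroup G} [Finite P]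
    (hP : IsPGroup p P) (hAP : Commute (A.map M.subtype : Set G) (P : Set G)) :
    P ≤ normalizer (A.map M.subtype) := by
  have hAn := hA.normal
  rw [le_normalizer_iff]
  rintro x hx _ ⟨a, ha, rfl⟩
  let φ : M ≃* M := MulAut.conjNormal x
  rcases hA.le_or_disjoint (A.comap φ.toMonoidHom) with hle | hdisj
  · exact ⟨φ a, hle ha, rfl⟩
  · refine absurd ?_ hAp
    have hB : (A.comap φ.toMonoidHom).map M.subtype ≤ A.map M.subtype ⊔ P := by
      rintro _ ⟨b, hb, rfl⟩
      have hx' : x ∈ A.map M.subtype ⊔ P := mem_sup_right hx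
      have hb' : x * b * x⁻¹ ∈ A.map M.subtype ⊔ P := mem_sup_left ⟨φ b, hb, rfl⟩
      exact (mul_mem_cancel_left hx').1 ((mul_mem_cancel_right (inv_mem hx')).1 hb')
    have hBA : (A.comap φ.toMonoidHom).map M.subtype ≤ normalizer (A.map M.subtype) :=
      (map_mono le_normalizer_of_normal).trans (le_normalizer_map _)
    have hBp : IsPGroup p ((A.comap φ.toMonoidHom).map M.subtype) :=
      isPGroup_of_disjoint_of_le_sup hP hAP hBA hB (disjoint_map M.subtype_injective hdisj)
    have hcomap : IsPGroup p (A.comap φ.toMonoidHom) :=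
      hBp.of_equiv (equivMapOfInjective _ _ M.subtype_injective).symm
    exact map_comap_eq_self_of_surjective (f := φ.toMonoidHom) φ.surjective A ▸ hcomap.map _

end IsMinimalNormal

theorem isMinimalNormal_map_mk' {N : Subgroup G} [N.Normal] [M.Normal] (hNM : N < M)
    (hmin : ∀ L : Subgroup G, L.Normal → N ≤ L → L ≤ M → L = N ∨ L = M) :
    IsMinimalNormal (M.map (QuotientGroup.mk' N)) := by
  have hf := QuotientGroup.mk'_surjective N
  refine ⟨⟨‹M.Normal›.map _ hf, fun h => ?_⟩, ?_⟩
  · rw [Subgroup.map_eq_bot_iff, QuotientGroup.ker_mk'] at h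
    exact hNM.not_ge h
  · rintro L ⟨hL, hne⟩ hLM
    have hcomap : L.comap (QuotientGroup.mk' N) ≤ M :=
      (comap_mono hLM).trans_eq <| by
        rw [comap_map_eq, QuotientGroup.ker_mk', sup_of_le_left hNM.le]
    refine map_le_iff_le_comap.2 ((hmin _ (hL.comap _) ?_ hcomap).resolve_left fun h => hne ?_).ge
    · exact (QuotientGroup.ker_mk' N).ge.trans (ker_le_comap _ L)
    · rw [← map_comap_eq_self_of_surjective hf L, h, QuotientGroup.map_mk'_self]

end MinimalNormal

section SSPermutable

variable {G : Type*} [Group G]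

theorem isSSSupplement_top_of_normal {H : Subgroup G} (hH : H.Normal) : IsSSSupplement H ⊤ := by
  refine ⟨?_, fun p _ P => ?_⟩
  · rw [← normal_mul, sup_top_eq, coe_top]
  · rw [← normal_mul, ← mul_normal, sup_comm]

theorem isNSSPermutable_of_normal {H : Subgroup G} (hH : H.Normal) : IsNSSPermutable H :=
  ⟨⊤, inferInstance, isSSSupplement_top_of_normal hH⟩

theorem IsNSSPermutable.isSSPermutable {H : Subgroup G} (hH : IsNSSPermutable H) :
    IsSSPermutable H :=
  hH.imp fun _ hK => hK.2

theorem IsSSTGroup.isSSPermutable_of_isSubnormal (hG : IsSSTGroup G) {A : Subgroup G}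
    (hA : A.IsSubnormal) : IsSSPermutable A := by
  induction hA with
  | top => exact (isNSSPermutable_of_normal inferInstance).isSSPermutable
  | step A K hAK _ hN ih => exact hG A K hAK (isNSSPermutable_of_normal hN).isSSPermutable ih

theorem IsNSSTGroup.isNSSPermutable_of_isSubnormal (hG : IsNSSTGroup G) {A : Subgroup G}
    (hA : A.IsSubnormal) : IsNSSPermutable A := by
  induction hA with
  | top => exact isNSSPermutable_of_normal inferInstance
  | step A K hAK _ hN ih => exact hG A K hAK (isNSSPermutable_of_normal hN) ih

theorem IsSSPermutable.map [Finite G] {G' : Type*} [Group G'] {f : G →* G'}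
    (hf : Function.Surjective f) {A : Subgroup G} (hA : IsSSPermutable A) :
    IsSSPermutable (A.map f) := by
  obtain ⟨K, hAK, hK⟩ := hA
  refine ⟨K.map f, ?_, fun p _ P => ?_⟩
  · rw [coe_map, coe_map, ← Set.image_mul, hAK, Set.image_univ_of_surjective hf]
  · obtain ⟨Q, rfl⟩ := Sylow.mapSurjective_surjective (f.subgroupMap_surjective K) p P
    have hmap : (Q.mapSurjective (f.subgroupMap_surjective K)).toSubgroup.map (K.map f).subtype =
        (Q.toSubgroup.map K.subtype).map f := by
      rw [Sylow.coe_mapSurjective, map_map, map_map]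
      rfl
    rw [hmap, coe_map f, coe_map f, ← Set.image_mul, ← Set.image_mul, hK p Q]

theorem IsSSPermutable.not_dvd_index [Finite G] {A H : Subgroup G} (hA : IsSSPermutable A)
    (hAH : A ≤ H) {p : ℕ} [Fact p.Prime]
    (h : ∀ P : Subgroup G, IsPGroup p P → Commute (A : Set G) (P : Set G) → P ≤ H) :
    ¬ p ∣ H.index := by
  obtain ⟨K, hAK, hK⟩ := hA
  obtain ⟨P⟩ : Nonempty (Sylow p K) := inferInstance
  have hPH : P.toSubgroup ≤ H.subgroupOf K :=
    map_le_iff_le_comap.1 (h _ (P.isPGroup'.map _) (hK p P))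
  have hHK : (H : Set G) * (K : Set G) = (⊤ : Subgroup G) :=
    Set.eq_univ_of_univ_subset (hAK ▸ Set.mul_subset_mul_right hAH)
  rw [← relIndex_top_right, ← relIndex_eq_of_mul_eq hHK]
  exact fun hp => P.not_dvd_index (hp.trans (index_dvd_of_le hPH))

theorem normal_of_forall_prime_not_dvd_index_normalizer {A : Subgroup G}
    (h : ∀ p : ℕ, p.Prime → ¬ p ∣ (normalizer (A : Set G)).index) : A.Normal :=
  normalizer_eq_top_iff.1 (index_eq_one.1 (Nat.eq_one_iff_not_exists_prime_dvd.2 h))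

theorem IsSSPermutable.normal_of_isPGroup [Finite G] {A M : Subgroup G} (hA : IsSSPermutable A)
    (hAM : A ≤ M) (hM : M.Normal) {p : ℕ} [Fact p.Prime] (hp : IsPGroup p M) {S : Sylow p G}
    (hS : S ≤ normalizer (A : Set G)) : A.Normal := by
  refine normal_of_forall_prime_not_dvd_index_normalizer fun q hq => ?_
  have : Fact q.Prime := ⟨hq⟩
  obtain rfl | hqp := eq_or_ne q p
  · exact fun hd => S.not_dvd_index (hd.trans (index_dvd_of_le hS))
  · refine hA.not_dvd_index le_normalizer fun Q hQ hAQ => ?_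
    refine le_normalizer_of_commute hAM le_normalizer_of_normal ?_ hAQ
    exact (IsPGroup.disjoint_of_ne p q hqp.symm M Q hp hQ).eq_bot.le.trans bot_le

namespace IsMinimalNormal

variable [Finite G] {M : Subgroup G}

theorem isSimpleGroup_of_isPGroup (hM : IsMinimalNormal M) {p : ℕ} [Fact p.Prime]
    (hp : IsPGroup p M) (h : ∀ A : Subgroup G, A.IsSubnormal → IsSSPermutable A) :
    IsSimpleGroup M := by
  have := hM.normal
  obtain ⟨S⟩ : Nonempty (Sylow p G) := inferInstance
  obtain ⟨z, hz⟩ : ∃ z : ↥(M ⊓ centralizer (S : Set G)), orderOf z = p := by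
    refine exists_prime_orderOf_dvd_card' p ((hp.to_le inf_le_left).card_eq_or_dvd.resolve_left ?_)
    rw [card_eq_one]
    refine inf_centralizer_ne_bot_of_dvd_card S.isPGroup' (hp.card_eq_or_dvd.resolve_left ?_)
    rw [card_eq_one]
    exact hM.ne_bot
  have hzM : zpowers (z : G) ≤ M := zpowers_le.2 z.2.1
  have hS : S ≤ normalizer (zpowers (z : G) : Set G) :=
    (le_centralizer_iff.1 (zpowers_le.2 z.2.2)).trans (centralizer_le_normalizer _)
  have hsub : (zpowers (z : G)).IsSubnormal := by
    refine .step _ M hzM (Normal.isSubnormal ‹_›) ((normal_subgroupOf_iff_le_normalizer hzM).2 ?_)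
    exact (hp.le_sylow_of_normal S).trans hS
  have hzn := (h _ hsub).normal_of_isPGroup hzM hM.normal hp hS
  have hcard : Nat.card (zpowers (z : G)) = p := by rw [Nat.card_zpowers, orderOf_coe, hz]
  rw [← hM.eq_of_le hzn ?_ hzM]
  · exact isSimpleGroup_of_prime_card hcard
  · rw [Ne, ← card_eq_one, hcard]
    exact (Fact.out : p.Prime).ne_one

theorem isSimpleGroup_of_forall_not_isPGroup (hM : IsMinimalNormal M)
    (hp : ∀ p : ℕ, p.Prime → ¬ IsPGroup p M)
    (h : ∀ A : Subgroup G, A.IsSubnormal → IsSSPermutable A) : IsSimpleGroup M := by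
  have := hM.normal
  have : Nontrivial M := (nontrivial_iff_ne_bot M).2 hM.ne_bot
  obtain ⟨A, hA⟩ := exists_isMinimalNormal (G := M)
  have hne : A.map M.subtype ≠ ⊥ := 
    (map_eq_bot_iff_of_injective A M.subtype_injective).not.2 hA.ne_bot
  have hsub : (A.map M.subtype).IsSubnormal :=
    IsSubnormal.trans' hA.normal.isSubnormal hM.normal.isSubnormal
  have hAn : (A.map M.subtype).Normal := by
    refine normal_of_forall_prime_not_dvd_index_normalizer fun p hpp => ?_
    have : Fact p.Prime := ⟨hpp⟩
    refine (h _ hsub).not_dvd_index le_normalizer fun P hP hAP =>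
      hA.le_normalizer_map_subtype_of_commute (fun hAp => hp p hpp ?_) hP hAP
    exact hM.isPGroup_of_isSubnormal_le hsub hne (map_subtype_le A) (hAp.map M.subtype)
  have hAM : A = ⊤ := map_injective M.subtype_injective <| by
    rw [hM.eq_of_le hAn hne (map_subtype_le A), ← MonoidHom.range_eq_map, range_subtype]
  exact (hAM ▸ hA).isSimpleGroup_of_top

theorem isSimpleGroup (hM : IsMinimalNormal M)
    (h : ∀ A : Subgroup G, A.IsSubnormal → IsSSPermutable A) : IsSimpleGroup M := by
  by_cases! hp : ∃ p : ℕ, p.Prime ∧ IsPGroup p M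
  · obtain ⟨p, hpp, hp⟩ := hp
    have : Fact p.Prime := ⟨hpp⟩
    exact hM.isSimpleGroup_of_isPGroup hp h
  · exact hM.isSimpleGroup_of_forall_not_isPGroup hp h

end IsMinimalNormal

end SSPermutable

theorem sst_or_nsst_group_is_SC_group_general {G : Type*} [Group G] [Finite G]
    (h : ∀ A : Subgroup G, A.IsSubnormal → IsSSPermutable A) :
    ∀ (N M : Subgroup G) [N.Normal] [M.Normal], N < M →
      (∀ L : Subgroup G, L.Normal → N ≤ L → L ≤ M → L = N ∨ L = M) →
      IsSimpleGroup (M ⧸ N.subgroupOf M) := by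
  intro N M _ _ hNM hmin
  let f := QuotientGroup.mk' N
  have hf : Function.Surjective f := QuotientGroup.mk'_surjective N
  have hquot : ∀ A : Subgroup (G ⧸ N), A.IsSubnormal → IsSSPermutable A := fun A hA =>
    map_comap_eq_self_of_surjective hf A ▸ (h _ (hA.comap f)).map hf
  have hsimple : IsSimpleGroup (M.map f) := (isMinimalNormal_map_mk' hNM hmin).isSimpleGroup hquot
  have hker : N.subgroupOf M = (f.subgroupMap M).ker := by
    rw [ker_subgroupMap, QuotientGroup.ker_mk']
  exact ((QuotientGroup.quotientMulEquivOfEq hker).trans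
    (QuotientGroup.quotientKerEquivOfSurjective _ (f.subgroupMap_surjective M))).isSimpleGroup

/-- Theorem A: every finite SST-group (resp. NSST-group) is an SC-group, i.e. every
chief factor `M/N` of `G` is a simple group. -/
theorem sst_or_nsst_group_is_SC_group {G : Type*} [Group G] [Finite G]
    (hG : IsSSTGroup G ∨ IsNSSTGroup G) :
    ∀ (N M : Subgroup G) [N.Normal] [M.Normal], N < M →
      (∀ L : Subgroup G, L.Normal → N ≤ L → L ≤ M → L = N ∨ L = M) →
      IsSimpleGroup (M ⧸ N.subgroupOf M) :=
  sst_or_nsst_group_is_SC_group_general fun _ hA => hG.elim (·.isSSPermutable_of_isSubnormal hA)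
    fun h => (h.isNSSPermutable_of_isSubnormal hA).isSSPermutable
end

section
/- Every finite solvable SST-group is a BT-group. -/
open scoped Pointwise

/-!
If `D` is a normal subgroup of `G` with `[D, D] ≤ H` and `P` is a Sylow subgroup of `D`, then
`G = D N_G(P)` by Frattini's argument, and rewriting `x d n = [x, d] d n (n⁻¹ x n)` for `x ∈ P`,
`d ∈ D`, `n ∈ N_G(P)` and `d n ∈ H` shows that `H` permutes with `P`; thus `D` is an SS-permutable
supplement of `H` as soon as `HD = G`. In a solvable group this applies to each step of the chain
`H = H D_k ≤ ⋯ ≤ H D_1 ≤ H D_0 = G`, where `D_i` is the derived series, so in a solvable SST-group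
every subgroup is SS-permutable.

An SS-permutable subgroup permutes with the Sylow `q`-subgroups of `G` for `q ∤ |H|`. If this holds
for all subgroups, take a `p`-subgroup `A ≤ P` and a `q`-subgroup `B ≤ Q`, with `P` and `Q` Sylow
and `p ≠ q`. The sets `AQ` and `PB` are invariant under inversion, hence so is `AQ ∩ PB = AB`, which
means that `A` and `B` permute. As subgroups are generated by their subgroups of prime power order,
every subgroup is semipermutable.
-/

section Permutability

variable {G : Type*} [Group G] {A B H K P Q : Subgroup G}

theorem commute_coe_of_mul_subset (h : (H : Set G) * K ⊆ K * H) : Commute (H : Set G) K :=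
  h.antisymm <| by simpa only [mul_inv_rev, inv_coe_set] using Set.inv_subset_inv.2 h

theorem commute_coe_sSup {𝒮 : Set (Subgroup G)} (h : ∀ K ∈ 𝒮, Commute (H : Set G) K) :
    Commute (H : Set G) (sSup 𝒮 : Subgroup G) := by
  refine commute_coe_of_mul_subset ?_
  rintro _ ⟨a, ha, x, hx, rfl⟩
  rw [SetLike.mem_coe, sSup_eq_iSup'] at hx
  induction hx using Subgroup.iSup_induction' generalizing a with
  | hp K x hx =>
    have hax : a * x ∈ (K : Set G) * H := (h K K.2).eq ▸ Set.mul_mem_mul ha hx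
    exact Set.mul_subset_mul_right (SetLike.coe_subset_coe.2 (le_sSup K.2)) hax
  | h1 => exact ⟨1, one_mem _, a, ha, by simp⟩
  | hmul x y _ _ ihx ihy =>
    obtain ⟨x', hx', b, hb, hxb : x' * b = a * x⟩ := ihx a ha
    obtain ⟨y', hy', c, hc, hyc : y' * c = b * y⟩ := ihy b hb
    refine ⟨x' * y', mul_mem hx' hy', c, hc, ?_⟩
    calc x' * y' * c = x' * b * y := by rw [mul_assoc, hyc, mul_assoc]
      _ = a * (x * y) := by rw [hxb, mul_assoc]

theorem mul_inter_mul_of_disjoint (hAP : A ≤ P) (hBQ : B ≤ Q) (hPQ : Disjoint P Q) :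
    ((A : Set G) * Q) ∩ (P * B) = A * B := by
  refine Set.Subset.antisymm ?_
    (Set.subset_inter (Set.mul_subset_mul_left hBQ) (Set.mul_subset_mul_right hAP))
  rintro _ ⟨⟨a, ha, y, hy, rfl⟩, x, hx, b, hb, hxy : x * b = a * y⟩
  have hya : a⁻¹ * x = y * b⁻¹ := by rw [inv_mul_eq_iff_eq_mul, ← mul_assoc, ← hxy]; group
  have hone : y * b⁻¹ = 1 := Subgroup.disjoint_def.1 hPQ
    (hya ▸ mul_mem (inv_mem (hAP ha)) hx) (mul_mem hy (inv_mem (hBQ hb)))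
  exact ⟨a, ha, b, hb, by rw [mul_inv_eq_one.1 hone]⟩

theorem commute_coe_of_le_of_disjoint (hAP : A ≤ P) (hBQ : B ≤ Q) (hPQ : Disjoint P Q)
    (hAQ : Commute (A : Set G) Q) (hBP : Commute (B : Set G) P) : Commute (A : Set G) B := by
  have hAB := mul_inter_mul_of_disjoint hAP hBQ hPQ
  calc (A : Set G) * B = ((Q : Set G) * A) ∩ (B * P) := by rw [← hAQ.eq, hBP.eq, hAB]
    _ = (((A : Set G) * Q) ∩ (P * B))⁻¹ := by simp only [Set.inter_inv, mul_inv_rev, inv_coe_set]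
    _ = (B : Set G) * A := by rw [hAB, mul_inv_rev, inv_coe_set, inv_coe_set]

theorem commute_coe_conj_smul (h : Commute (H : Set G) K) {a : G} (ha : a ∈ H) :
    Commute (H : Set G) (MulAut.conj a • K : Subgroup G) := by
  have hconj := congrArg (MulAut.conj a • ·) h.eq
  simp only [smul_mul', ← Subgroup.coe_pointwise_smul,
    Subgroup.conj_smul_eq_self_of_mem ha] at hconj
  exact hconj

theorem index_dvd_card_of_mul_eq_univ (h : (H : Set G) * (K : Set G) = Set.univ) :
    K.index ∣ Nat.card H := by
  have : MulAction.IsPretransitive H (G ⧸ K) := by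
    refine (MulAction.isPretransitive_iff_base ((1 : G) : G ⧸ K)).2 fun x => ?_
    obtain ⟨g, rfl⟩ := QuotientGroup.mk_surjective x
    obtain ⟨a, ha, k, hk, rfl⟩ : g ∈ (H : Set G) * K := h ▸ Set.mem_univ g
    exact ⟨⟨a, ha⟩, QuotientGroup.eq.2 (by simpa using hk)⟩
  rw [Subgroup.index, ← MulAction.index_stabilizer_of_transitive H ((1 : G) : G ⧸ K)]
  exact Subgroup.index_dvd_card _

end Permutability

section PrimePower

variable {G : Type*} [Group G] {H K X Y : Subgroup G}

theorem exists_sylow_le_of_not_dvd_index [Finite K] {p : ℕ} [Fact p.Prime] (h : ¬ p ∣ K.index) :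
    ∃ P : Sylow p G, (P : Subgroup G) ≤ K := by
  let P : Sylow p K := default
  have hP : ¬ p ∣ (P.toSubgroup.map K.subtype).index := by
    rw [Subgroup.index_map_subtype, (Fact.out : p.Prime).dvd_mul]
    exact not_or.2 ⟨P.not_dvd_index, h⟩
  exact ⟨(P.isPGroup'.map K.subtype).toSylow hP, Subgroup.map_subtype_le _⟩

theorem le_of_forall_isPGroup_le [Finite X]
    (h : ∀ p : ℕ, p.Prime → p ∣ Nat.card X → ∀ A ≤ X, IsPGroup p A → A ≤ Y) : X ≤ Y := by
  rw [← Subgroup.relIndex_eq_one, Nat.eq_one_iff_not_exists_prime_dvd]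
  intro p hp hdvd
  have : Fact p.Prime := ⟨hp⟩
  let P : Sylow p X := default
  have hPY : P.toSubgroup ≤ Y.subgroupOf X := by
    rw [Subgroup.subgroupOf, ← Subgroup.map_le_iff_le_comap]
    exact h p hp (hdvd.trans (Subgroup.relIndex_dvd_card Y X)) _ (Subgroup.map_subtype_le _)
      (P.isPGroup'.map _)
  exact P.not_dvd_index (hdvd.trans (Subgroup.index_dvd_of_le hPY))

theorem commute_coe_of_forall_isPGroup_le [Finite X]
    (h : ∀ p : ℕ, p.Prime → p ∣ Nat.card X → ∀ A ≤ X, IsPGroup p A → Commute (H : Set G) A) :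
    Commute (H : Set G) X := by
  let 𝒮 : Set (Subgroup G) := {A | A ≤ X ∧ Commute (H : Set G) A}
  have hX : X = sSup 𝒮 := le_antisymm
    (le_of_forall_isPGroup_le fun p hp hpX A hAX hA => le_sSup ⟨hAX, h p hp hpX A hAX hA⟩)
    (sSup_le fun A hA => hA.1)
  rw [hX]
  exact commute_coe_sSup fun A hA => hA.2

end PrimePower

section SSPermutable

variable {G : Type*} [Group G] {D H K : Subgroup G}

open scoped commutatorElement in
theorem commute_coe_map_sylow_of_commutator_le [D.Normal] {p : ℕ} [Fact p.Prime] (P : Sylow p D)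
    [Finite (Sylow p D)] (h : ⁅D, D⁆ ≤ H) :
    Commute (H : Set G) (P.toSubgroup.map D.subtype : Subgroup G) := by
  refine (commute_coe_of_mul_subset ?_).symm
  rintro _ ⟨x, hx, a, ha, rfl⟩
  have hfrattini : a ∈ D ⊔ Subgroup.normalizer (P.toSubgroup.map D.subtype : Set G) := by
    rw [sup_comm, P.normalizer_sup_eq_top]
    exact Subgroup.mem_top a
  obtain ⟨d, hd, n, hn, rfl⟩ := Subgroup.mem_sup_of_normal_left.1 hfrattini
  have hxd : ⁅x, d⁆ ∈ H := h (Subgroup.commutator_mem_commutator (Subgroup.map_subtype_le _ hx) hd)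
  have hxn : n⁻¹ * x * n ∈ P.toSubgroup.map D.subtype := (Subgroup.mem_normalizer_iff''.1 hn x).1 hx
  exact ⟨⁅x, d⁆ * (d * n), mul_mem hxd ha, n⁻¹ * x * n, hxn, by
    simp only [commutatorElement_def]; group⟩

theorem isSSSupplement_of_commutator_le [D.Normal] [Finite D] (hHD : Codisjoint H D)
    (h : ⁅D, D⁆ ≤ H) : IsSSSupplement H D :=
  ⟨by rw [← Subgroup.mul_normal, hHD.eq_top, Subgroup.coe_top],
    fun _ _ P => commute_coe_map_sylow_of_commutator_le P h⟩

theorem isSSPermutable_subgroupOf_sup [D.Normal] [Finite D] (h : ⁅D, D⁆ ≤ H) :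
    IsSSPermutable (H.subgroupOf (H ⊔ D)) := by
  have : Finite (D.subgroupOf (H ⊔ D)) :=
    Finite.of_equiv D (Subgroup.subgroupOfEquivOfLe le_sup_right).symm.toEquiv
  refine ⟨D.subgroupOf (H ⊔ D),
    isSSSupplement_of_commutator_le (Subgroup.codisjoint_subgroupOf_sup H D) ?_⟩
  refine Subgroup.map_le_iff_le_comap.1 ?_
  rwa [Subgroup.map_commutator, Subgroup.map_subgroupOf_eq_of_le le_sup_right]

theorem IsSSTGroup.isSSPermutable_sup_derivedSeries [Finite G] (hG : IsSSTGroup G)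
    (H : Subgroup G) (n : ℕ) : IsSSPermutable (H ⊔ derivedSeries G n) := by
  induction n with
  | zero =>
    rw [derivedSeries_zero, sup_top_eq]
    exact ⟨⊤, isSSSupplement_of_commutator_le codisjoint_top_left le_top⟩
  | succ n ih =>
    have hle : derivedSeries G (n + 1) ≤ derivedSeries G n := derivedSeries_antitone G n.le_succ
    have hstep : IsSSPermutable
        ((H ⊔ derivedSeries G (n + 1)).subgroupOf (H ⊔ derivedSeries G n)) := by
      rw [← sup_eq_right.2 hle, ← sup_assoc]
      exact isSSPermutable_subgroupOf_sup le_sup_right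
    exact hG _ _ (sup_le_sup_left hle H) hstep ih

theorem IsSSTGroup.isSSPermutable [Finite G] [Group.IsSolvable G] (hG : IsSSTGroup G)
    (H : Subgroup G) : IsSSPermutable H := by
  obtain ⟨n, hn⟩ := Group.IsSolvable.solvable (G := G)
  simpa only [hn, sup_bot_eq] using hG.isSSPermutable_sup_derivedSeries H n

theorem IsSSSupplement.commute_sylow (h : IsSSSupplement H K) {p : ℕ} [Fact p.Prime]
    {P : Sylow p G} (hP : (P : Subgroup G) ≤ K) : Commute (H : Set G) P := by
  have hcomm := h.2 p (P.subtype hP)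
  rwa [Sylow.coe_subtype, Subgroup.map_subgroupOf_eq_of_le hP] at hcomm

theorem IsSSPermutable.isSSemipermutable [Finite G] (h : IsSSPermutable H) :
    IsSSemipermutable H := by
  obtain ⟨K, hHK⟩ := h
  intro q _ hqH Q
  have hqK : ¬ q ∣ K.index := fun hq => hqH (hq.trans (index_dvd_card_of_mul_eq_univ hHK.1))
  obtain ⟨R, hRK⟩ := exists_sylow_le_of_not_dvd_index hqK
  obtain ⟨g, rfl⟩ := MulAction.exists_smul_eq G R Q
  obtain ⟨a, ha, k, hk, hg : a * k = g⟩ : g ∈ (H : Set G) * K := hHK.1 ▸ Set.mem_univ g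
  have hcomm : Commute (H : Set G) (k • R : Sylow q G) :=
    hHK.commute_sylow (Sylow.smul_le hRK ⟨k, hk⟩)
  rw [← hg, mul_smul]
  exact commute_coe_conj_smul hcomm ha

end SSPermutable

section Semipermutable

variable {G : Type*} [Group G] {A B : Subgroup G} {p q : ℕ} [Fact p.Prime] [Fact q.Prime]

theorem IsSSemipermutable.commute_sylow_of_isPGroup [Finite A] (h : IsSSemipermutable A)
    (hA : IsPGroup p A) (hpq : p ≠ q) (Q : Sylow q G) : Commute (A : Set G) Q := by
  obtain ⟨n, hn⟩ := hA.exists_card_eq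
  refine h q (fun hq => hpq ?_) Q
  exact (Nat.prime_eq_prime_of_dvd_pow Fact.out Fact.out (hn ▸ hq)).symm

theorem commute_coe_of_isPGroup_of_ne [Finite A] [Finite B]
    (h : ∀ H : Subgroup G, IsSSemipermutable H) (hA : IsPGroup p A) (hB : IsPGroup q B)
    (hpq : p ≠ q) : Commute (A : Set G) B := by
  obtain ⟨P, hAP⟩ := hA.exists_le_sylow
  obtain ⟨Q, hBQ⟩ := hB.exists_le_sylow
  exact commute_coe_of_le_of_disjoint hAP hBQ
    (IsPGroup.disjoint_of_ne p q hpq P.toSubgroup Q.toSubgroup P.isPGroup' Q.isPGroup')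
    ((h A).commute_sylow_of_isPGroup hA hpq Q) ((h B).commute_sylow_of_isPGroup hB hpq.symm P)

theorem isSemipermutable_of_forall_isSSemipermutable [Finite G]
    (h : ∀ H : Subgroup G, IsSSemipermutable H) (H : Subgroup G) : IsSemipermutable H := by
  intro X hHX
  refine commute_coe_of_forall_isPGroup_le fun q hq hqX B _ hB => Commute.symm ?_
  refine commute_coe_of_forall_isPGroup_le fun p hp hpH A _ hA => Commute.symm ?_
  have : Fact p.Prime := ⟨hp⟩
  have : Fact q.Prime := ⟨hq⟩
  have hpq : p ≠ q := by
    rintro rfl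
    exact Nat.not_coprime_of_dvd_of_dvd hp.one_lt hpH hqX hHX
  exact commute_coe_of_isPGroup_of_ne h hA hB hpq

end Semipermutable

/-- Corollary 1.4: a finite solvable SST-group is a BT-group. -/
theorem solvable_sst_group_is_bt_group {G : Type*} [Group G] [Finite G]
    (hsol : IsSolvable G) (hsst : IsSSTGroup G) : IsBTGroup G := by
  have : Group.IsSolvable G := hsol
  intro H _ _ _ _
  exact isSemipermutable_of_forall_isSSemipermutable
    (fun A => (hsst.isSSPermutable A).isSSemipermutable) H
end
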